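/- arXiv:1712.08407 — 3 statements merged into one kernel-verified Lean document; each statement's English description precedes it below -/
import Mathlib

section
/- If the bipartite graph G has a perfect matching, then the closed-loop system bipartite graph B has a perfect matching. (Paper's Lemma 1.) -/
namespace ResilientFeedback

/-- Vertices of the closed-loop system bipartite graph: `Sum.inl i` is `x_i`
(resp. `x'_i` on the left side), `Sum.inr (Sum.inl i)` is `u_i` (resp. `u'_i`),
and `Sum.inr (Sum.inr i)` is `y_i` (resp. `y'_i`).  Indices are 1-based. -/
abbrev V3 : Type := ℕ ⊕ ℕ ⊕ ℕ

def xv (i : ℕ) : V3 := Sum.inl i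
def uv (i : ℕ) : V3 := Sum.inr (Sum.inl i)
def yv (i : ℕ) : V3 := Sum.inr (Sum.inr i)

/-- `M` is a matching of the edge set `Ed`: a subset of `Ed` in which no two
distinct edges share an endpoint. -/
def IsMatching {α β : Type} (Ed M : Set (α × β)) : Prop :=
  M ⊆ Ed ∧ ∀ e ∈ M, ∀ f ∈ M, e ≠ f → e.1 ≠ f.1 ∧ e.2 ≠ f.2

/-- A perfect matching of a bipartite graph with left vertex set `L`:
a matching covering every vertex of `L`. -/
def IsPerfectMatchingLeft {α β : Type} (L : Set α) (Ed M : Set (α × β)) : Prop :=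
  IsMatching Ed M ∧ ∀ a ∈ L, ∃ b, (a, b) ∈ M

/-- A perfect matching of a bipartite graph with left vertex set `L` and right
vertex set `R` of equal size: a matching covering every vertex of `L` and of `R`. -/
def IsPerfectMatchingOn {α β : Type} (L : Set α) (R : Set β) (Ed M : Set (α × β)) : Prop :=
  IsMatching Ed M ∧ (∀ a ∈ L, ∃ b, (a, b) ∈ M) ∧ (∀ b ∈ R, ∃ a, (a, b) ∈ M)

/-- The (left, and identically the right) vertex set of the closed-loop system
bipartite graph `B`: `x'_1, …, x'_{s+2}` (resp. `x_1,…,x_{s+2}`), `u'_1,…,u'_s`, `y'_1,…,y'_r`. -/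
def vertsB (r s : ℕ) : Set V3 :=
  {v | (∃ i ∈ Set.Icc 1 (s + 2), v = xv i) ∨ (∃ i ∈ Set.Icc 1 s, v = uv i) ∨
       (∃ i ∈ Set.Icc 1 r, v = yv i)}

/-- The edges of the closed-loop system bipartite graph `B` built from the bipartite
graph `G = ({1,…,r}, {1,…,s}, E)`; a pair `(l, rgt)` is an edge from left vertex `l`
to right vertex `rgt`. -/
def edgesB (r s : ℕ) (E : Set (ℕ × ℕ)) : Set (V3 × V3) :=
  {e | (∃ j ∈ Set.Icc 1 (s + 2), e = (xv 2, xv j)) ∨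
       (∃ i ∈ Set.Icc 1 (s + 2), e = (xv i, xv 2)) ∨
       (∃ i ∈ Set.Icc 3 (s - r + 2), ∃ j ∈ Set.Icc 3 (s + 2), e = (xv i, xv j)) ∨
       (∃ i ∈ Set.Icc (s - r + 3) (s + 2), ∃ j ∈ Set.Icc 1 s, e = (xv i, uv j)) ∨
       (∃ i ∈ Set.Icc 1 r, ∃ j ∈ Set.Icc 3 (s + 2), e = (yv i, xv j)) ∨
       (∃ i j, (j, i) ∈ E ∧ e = (uv i, yv j)) ∨
       (∃ i ∈ Set.Icc 1 s, e = (uv i, uv i)) ∨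
       (∃ i ∈ Set.Icc 1 r, e = (yv i, yv i))}

/-- The feedback edges `E_K` of `B`: `u'_i — y_j` for exactly those pairs with
`(v_j, ṽ_i) ∈ E`. -/
def EKset (E : Set (ℕ × ℕ)) : Set (V3 × V3) :=
  {e | ∃ i j, (j, i) ∈ E ∧ e = (uv i, yv j)}

/-!
Read an edge `a' — b` of `B` as an arrow `a → b`: a perfect matching of `B` is then a partition of
the vertices into directed cycles. A perfect matching of `G` sends each `v_k` to some `ṽ_{f k}` with
`f` injective, so the feedback edges `u'_{f k} — y_k` close pairwise disjoint 3-cycles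
`x_{s-r+2+k} → u_{f k} → y_k → x_{s-r+2+k}`. Of the remaining vertices, `x_1` and `x_2` form a
2-cycle and all others carry loops.
-/

section General

variable {ι : Type*} {α β : Type} {L L₁ L₂ : Set α} {R R₁ R₂ : Set β} {Ed : Set (α × β)}

/-- The bipartite subgraph of `Ed` induced on left vertices `L` and right vertices `R` has a perfect
matching. Restricting to `L ×ˢ R` excludes matchings that also use edges outside of it, so that
perfect matchings on disjoint vertex sets can be glued. -/
def HasPerfectMatching (L : Set α) (R : Set β) (Ed : Set (α × β)) : Prop :=
  ∃ M, IsPerfectMatchingOn L R (Ed ∩ L ×ˢ R) M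

theorem HasPerfectMatching.exists_isPerfectMatchingOn (h : HasPerfectMatching L R Ed) :
    ∃ M, IsPerfectMatchingOn L R Ed M := by
  obtain ⟨M, ⟨hsub, hdisj⟩, hcover⟩ := h
  exact ⟨M, ⟨hsub.trans Set.inter_subset_left, hdisj⟩, hcover⟩

theorem hasPerfectMatching_image {I : Set ι} {a : ι → α} {b : ι → β} (ha : Set.InjOn a I)
    (hb : Set.InjOn b I) (hEd : ∀ i ∈ I, (a i, b i) ∈ Ed) :
    HasPerfectMatching (a '' I) (b '' I) Ed := by
  refine ⟨(fun i => (a i, b i)) '' I, ⟨?_, ?_⟩, ?_, ?_⟩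
  · rintro _ ⟨i, hi, rfl⟩
    exact ⟨hEd i hi, Set.mem_image_of_mem a hi, Set.mem_image_of_mem b hi⟩
  · rintro _ ⟨i, hi, rfl⟩ _ ⟨j, hj, rfl⟩ hne
    have hij : i ≠ j := by rintro rfl; exact hne rfl
    exact ⟨ha.ne hi hj hij, hb.ne hi hj hij⟩
  · rintro _ ⟨i, hi, rfl⟩
    exact ⟨b i, i, hi, rfl⟩
  · rintro _ ⟨i, hi, rfl⟩
    exact ⟨a i, i, hi, rfl⟩

theorem hasPerfectMatching_of_loops {S : Set α} {Ed : Set (α × α)} (hEd : ∀ v ∈ S, (v, v) ∈ Ed) :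
    HasPerfectMatching S S Ed := by
  simpa only [Set.image_id] using
    hasPerfectMatching_image (Set.injOn_id S) (Set.injOn_id S) hEd

theorem HasPerfectMatching.union (h₁ : HasPerfectMatching L₁ R₁ Ed)
    (h₂ : HasPerfectMatching L₂ R₂ Ed) (hL : Disjoint L₁ L₂) (hR : Disjoint R₁ R₂) :
    HasPerfectMatching (L₁ ∪ L₂) (R₁ ∪ R₂) Ed := by
  obtain ⟨M₁, ⟨hsub₁, hdisj₁⟩, hleft₁, hright₁⟩ := h₁
  obtain ⟨M₂, ⟨hsub₂, hdisj₂⟩, hleft₂, hright₂⟩ := h₂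
  have apart : ∀ e ∈ M₁, ∀ f ∈ M₂, e.1 ≠ f.1 ∧ e.2 ≠ f.2 := fun e he f hf =>
    ⟨hL.ne_of_mem (hsub₁ he).2.1 (hsub₂ hf).2.1, hR.ne_of_mem (hsub₁ he).2.2 (hsub₂ hf).2.2⟩
  refine ⟨M₁ ∪ M₂, ⟨?_, ?_⟩, ?_, ?_⟩
  · exact Set.union_subset
      (hsub₁.trans (by gcongr <;> exact Set.subset_union_left))
      (hsub₂.trans (by gcongr <;> exact Set.subset_union_right))
  · rintro e (he | he) f (hf | hf) hne
    · exact hdisj₁ e he f hf hne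
    · exact apart e he f hf
    · exact (apart f hf e he).imp Ne.symm Ne.symm
    · exact hdisj₂ e he f hf hne
  · rintro a (ha | ha)
    · exact (hleft₁ a ha).imp fun _ => Or.inl
    · exact (hleft₂ a ha).imp fun _ => Or.inr
  · rintro b (hb | hb)
    · exact (hright₁ b hb).imp fun _ => Or.inl
    · exact (hright₂ b hb).imp fun _ => Or.inr

theorem hasPerfectMatching_pair {a b : α} {Ed : Set (α × α)} (hab : (a, b) ∈ Ed)
    (hba : (b, a) ∈ Ed) : HasPerfectMatching {a, b} {a, b} Ed := by
  classical
  have swapped : HasPerfectMatching (id '' {a, b}) (Equiv.swap a b '' {a, b}) Ed :=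
    hasPerfectMatching_image (Set.injOn_id _) (Equiv.swap a b).injective.injOn (by simp [hab, hba])
  simpa [Set.image_pair, Set.pair_comm b a] using swapped

theorem HasPerfectMatching.threeCycle {A B C : Set α} {Ed : Set (α × α)}
    (hAB : HasPerfectMatching A B Ed) (hBC : HasPerfectMatching B C Ed)
    (hCA : HasPerfectMatching C A Ed) (dAB : Disjoint A B) (dBC : Disjoint B C)
    (dCA : Disjoint C A) : HasPerfectMatching (A ∪ B ∪ C) (A ∪ B ∪ C) Ed := by
  have rotated : HasPerfectMatching (A ∪ B ∪ C) (B ∪ C ∪ A) Ed :=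
    (hAB.union hBC dAB dBC).union hCA (dCA.symm.union_left dBC) (dAB.symm.union_left dCA)
  rwa [Set.union_comm (B ∪ C) A, ← Set.union_assoc] at rotated

theorem IsPerfectMatchingLeft.exists_injOn [Nonempty β] {M : Set (α × β)}
    (h : IsPerfectMatchingLeft L Ed M) :
    ∃ f : α → β, Set.InjOn f L ∧ ∀ a ∈ L, (a, f a) ∈ Ed := by
  obtain ⟨⟨hsub, hdisj⟩, hcover⟩ := h
  choose! f hf using hcover
  refine ⟨f, fun a ha b hb hfab => ?_, fun a ha => hsub (hf a ha)⟩
  by_contra hab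
  exact (hdisj _ (hf a ha) _ (hf b hb) fun h => hab (congrArg Prod.fst h)).2 hfab

end General

section ClosedLoop

variable {r s : ℕ} {E : Set (ℕ × ℕ)} {f : ℕ → ℕ}

theorem xv_injective : Function.Injective xv := Sum.inl_injective

theorem uv_injective : Function.Injective uv := Sum.inr_injective.comp Sum.inl_injective

theorem yv_injective : Function.Injective yv := Sum.inr_injective.comp Sum.inr_injective

theorem disjoint_image_xv_image_uv (A B : Set ℕ) : Disjoint (xv '' A) (uv '' B) := by
  simp [Set.disjoint_left, xv, uv]

theorem disjoint_image_xv_image_yv (A B : Set ℕ) : Disjoint (xv '' A) (yv '' B) := by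
  simp [Set.disjoint_left, xv, yv]

theorem disjoint_image_uv_image_yv (A B : Set ℕ) : Disjoint (uv '' A) (yv '' B) := by
  simp [Set.disjoint_left, uv, yv]

theorem image_xv_Icc_eq (hrs : r ≤ s) :
    xv '' Set.Icc (s - r + 3) (s + 2) = (fun k => xv (s - r + 2 + k)) '' Set.Icc 1 r := by
  have hshift : Set.Icc (s - r + 3) (s + 2) = (s - r + 2 + ·) '' Set.Icc 1 r := by
    rw [Set.image_const_add_Icc]
    congr 1
    omega
  rw [hshift, Set.image_image]

theorem hasPerfectMatching_edgesB_pair :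
    HasPerfectMatching {xv 1, xv 2} {xv 1, xv 2} (edgesB r s E) :=
  hasPerfectMatching_pair
    (.inr (.inl ⟨1, ⟨le_rfl, by omega⟩, rfl⟩)) (.inl ⟨1, ⟨le_rfl, by omega⟩, rfl⟩)

theorem hasPerfectMatching_edgesB_loops {A B : Set ℕ} (hA : A ⊆ Set.Icc 3 (s - r + 2))
    (hB : B ⊆ Set.Icc 1 s) :
    HasPerfectMatching (xv '' A ∪ uv '' B) (xv '' A ∪ uv '' B) (edgesB r s E) := by
  refine hasPerfectMatching_of_loops ?_
  rintro _ (⟨i, hi, rfl⟩ | ⟨i, hi, rfl⟩)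
  · have hi' : i ∈ Set.Icc 3 (s + 2) := Set.Icc_subset_Icc_right (by omega) (hA hi)
    exact .inr (.inr (.inl ⟨i, hA hi, i, hi', rfl⟩))
  · exact .inr (.inr (.inr (.inr (.inr (.inr (.inl ⟨i, hB hi, rfl⟩))))))

theorem hasPerfectMatching_edgesB_feedback (hrs : r ≤ s) (hinj : Set.InjOn f (Set.Icc 1 r))
    (hmaps : Set.MapsTo f (Set.Icc 1 r) (Set.Icc 1 s)) (hf : ∀ k ∈ Set.Icc 1 r, (k, f k) ∈ E) :
    HasPerfectMatching
      (xv '' Set.Icc (s - r + 3) (s + 2) ∪ uv '' (f '' Set.Icc 1 r) ∪ yv '' Set.Icc 1 r)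
      (xv '' Set.Icc (s - r + 3) (s + 2) ∪ uv '' (f '' Set.Icc 1 r) ∪ yv '' Set.Icc 1 r)
      (edgesB r s E) := by
  have injX : Set.InjOn (fun k => xv (s - r + 2 + k)) (Set.Icc 1 r) :=
    (xv_injective.comp (add_right_injective _)).injOn
  have injU : Set.InjOn (fun k => uv (f k)) (Set.Icc 1 r) :=
    uv_injective.comp_injOn hinj
  have injY : Set.InjOn yv (Set.Icc 1 r) := yv_injective.injOn
  refine HasPerfectMatching.threeCycle ?xu ?uy ?yx (disjoint_image_xv_image_uv _ _)
    (disjoint_image_uv_image_yv _ _) (disjoint_image_xv_image_yv _ _).symm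
  case xu =>
    rw [image_xv_Icc_eq hrs, Set.image_image]
    refine hasPerfectMatching_image injX injU fun k hk => ?_
    have hx : s - r + 2 + k ∈ Set.Icc (s - r + 3) (s + 2) := by grind
    exact .inr (.inr (.inr (.inl ⟨s - r + 2 + k, hx, f k, hmaps hk, rfl⟩)))
  case uy =>
    rw [Set.image_image]
    refine hasPerfectMatching_image injU injY fun k hk => ?_
    exact .inr (.inr (.inr (.inr (.inr (.inl ⟨f k, k, hf k hk, rfl⟩)))))
  case yx =>
    rw [image_xv_Icc_eq hrs]
    refine hasPerfectMatching_image injY injX fun k hk => ?_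
    have hx : s - r + 2 + k ∈ Set.Icc 3 (s + 2) := by grind
    exact .inr (.inr (.inr (.inr (.inl ⟨k, hk, s - r + 2 + k, hx, rfl⟩))))

theorem vertsB_eq_union_images (r s : ℕ) :
    vertsB r s = xv '' Set.Icc 1 (s + 2) ∪ uv '' Set.Icc 1 s ∪ yv '' Set.Icc 1 r := by
  ext v
  simp only [vertsB, Set.mem_ofPred_eq, Set.mem_union, Set.mem_image, eq_comm, or_assoc]

theorem vertsB_eq_union_cycles {F : Set ℕ} (hF : F ⊆ Set.Icc 1 s) :
    vertsB r s = {xv 1, xv 2} ∪ (xv '' Set.Icc 3 (s - r + 2) ∪ uv '' (Set.Icc 1 s \ F)) ∪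
      (xv '' Set.Icc (s - r + 3) (s + 2) ∪ uv '' F ∪ yv '' Set.Icc 1 r) := by
  have hx : Set.Icc 1 (s + 2) =
      {1, 2} ∪ Set.Icc 3 (s - r + 2) ∪ Set.Icc (s - r + 3) (s + 2) := by
    ext i
    simp only [Set.mem_union, Set.mem_insert_iff, Set.mem_singleton_iff, Set.mem_Icc]
    omega
  have hu : Set.Icc 1 s = Set.Icc 1 s \ F ∪ F := (Set.sdiff_union_of_subset hF).symm
  rw [vertsB_eq_union_images, hx]
  nth_rewrite 1 [hu]
  simp only [Set.image_union, Set.image_pair]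
  ac_rfl

theorem hasPerfectMatching_edgesB (hrs : r ≤ s) (hinj : Set.InjOn f (Set.Icc 1 r))
    (hmaps : Set.MapsTo f (Set.Icc 1 r) (Set.Icc 1 s)) (hf : ∀ k ∈ Set.Icc 1 r, (k, f k) ∈ E) :
    HasPerfectMatching (vertsB r s) (vertsB r s) (edgesB r s E) := by
  set F := f '' Set.Icc 1 r
  set pair : Set V3 := {xv 1, xv 2}
  set loops := xv '' Set.Icc 3 (s - r + 2) ∪ uv '' (Set.Icc 1 s \ F)
  set cycles := xv '' Set.Icc (s - r + 3) (s + 2) ∪ uv '' F ∪ yv '' Set.Icc 1 r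
  have pair_loops : Disjoint pair loops := by
    rw [Set.disjoint_left]
    grind [xv, uv]
  have rest_cycles : Disjoint (pair ∪ loops) cycles := by
    rw [Set.disjoint_left]
    grind [xv, uv, yv]
  have hpair : HasPerfectMatching pair pair (edgesB r s E) := hasPerfectMatching_edgesB_pair
  have hloops : HasPerfectMatching loops loops (edgesB r s E) :=
    hasPerfectMatching_edgesB_loops subset_rfl Set.sdiff_subset
  have hcycles : HasPerfectMatching cycles cycles (edgesB r s E) :=
    hasPerfectMatching_edgesB_feedback hrs hinj hmaps hf
  rw [vertsB_eq_union_cycles hmaps.image_subset]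
  exact (hpair.union hloops pair_loops pair_loops).union hcycles rest_cycles rest_cycles

end ClosedLoop

/-- paper's Lemma 1.  If the bipartite graph `G` has a perfect
matching, then the closed-loop system bipartite graph `B` has a perfect matching. -/
theorem B_has_perfect_matching (r s : ℕ) (hr : 0 < r) (hrs : r ≤ s)
    (E : Set (ℕ × ℕ)) (hE : E ⊆ Set.Icc 1 r ×ˢ Set.Icc 1 s)
    (hG : ∃ M, IsPerfectMatchingLeft (Set.Icc 1 r) E M) :
    ∃ M, IsPerfectMatchingOn (vertsB r s) (vertsB r s) (edgesB r s E) M := by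
  obtain ⟨M, hM⟩ := hG
  obtain ⟨f, hinj, hf⟩ := hM.exists_injOn
  have hmaps : Set.MapsTo f (Set.Icc 1 r) (Set.Icc 1 s) := fun k hk => (hE (hf k hk)).2
  exact (hasPerfectMatching_edgesB hrs hinj hmaps hf).exists_isPerfectMatchingOn

end ResilientFeedback
end

section
/- Every perfect matching M_B of the closed-loop system bipartite graph B satisfies: M_B ∩ E_K has cardinality exactly r, it matches all of the vertices y_1,…,y_r, and the edge set {(v_j, ṽ_i) : the edge u'_i—y_j belongs to M_B ∩ E_K} is a perfect matching of G. (Structural claim proved in the only-if part of Theorem 1.) -/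
/-!
The `s + 1` right vertices `x_j` with `j ≠ 2` are adjacent only to the `s + 1` left vertices
`x'_2, …, x'_{s-r+2}, y'_1, …, y'_r`. A perfect matching therefore pairs these two sets off
completely, so every `y'_i` is matched to a state and the edges `y'_i — y_i` go unused. The only
other edges at `y_1, …, y_r` are feedback edges, so each `y_j` is matched through `E_K`.
-/

namespace ResilientFeedback

namespace IsMatching

variable {α β : Type} {Ed M : Set (α × β)}

theorem injOn_fst (hM : IsMatching Ed M) : Set.InjOn Prod.fst M := fun e he f hf hef => by
  by_contra hne
  exact (hM.2 e he f hf hne).1 hef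

theorem injOn_snd (hM : IsMatching Ed M) : Set.InjOn Prod.snd M := fun e he f hf hef => by
  by_contra hne
  exact (hM.2 e he f hf hne).2 hef

theorem eq_of_mem_of_mem (hM : IsMatching Ed M) {a : α} {b c : β}
    (hb : (a, b) ∈ M) (hc : (a, c) ∈ M) : b = c :=
  congrArg Prod.snd (hM.injOn_fst hb hc rfl)

theorem inter (hM : IsMatching Ed M) (Ed' : Set (α × β)) : IsMatching Ed' (M ∩ Ed') :=
  ⟨Set.inter_subset_right, fun e he f hf => hM.2 e he.1 f hf.1⟩

theorem swap (hM : IsMatching Ed M) : IsMatching (Prod.swap ⁻¹' Ed) (Prod.swap ⁻¹' M) :=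
  ⟨Set.preimage_mono hM.1, fun e he f hf hne =>
    (hM.2 e.swap he f.swap hf (Prod.swap_injective.ne hne)).symm⟩

theorem preimage_prodMap {γ δ : Type} {f : γ → α} {g : δ → β} (hM : IsMatching Ed M)
    (hf : f.Injective) (hg : g.Injective) :
    IsMatching (Prod.map f g ⁻¹' Ed) (Prod.map f g ⁻¹' M) :=
  ⟨Set.preimage_mono hM.1, fun _ he _ he' hne =>
    (hM.2 _ he _ he' ((hf.prodMap hg).ne hne)).imp (ne_of_apply_ne f) (ne_of_apply_ne g)⟩

theorem exists_mem_of_card_le {S : Finset β} {T : Finset α} (hM : IsMatching Ed M)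
    (hST : ∀ b ∈ S, ∃ a ∈ T, (a, b) ∈ M) (hcard : T.card ≤ S.card) :
    ∀ a ∈ T, ∃ b ∈ S, (a, b) ∈ M := by
  choose partner hpartner hmem using hST
  intro a ha
  obtain ⟨b, hb, rfl⟩ := Finset.surj_on_of_inj_on_of_card_le partner hpartner
    (fun b c hb hc hbc => hM.eq_of_mem_of_mem (hmem b hb) (hbc ▸ hmem c hc)) hcard a ha
  exact ⟨b, hb, hmem b hb⟩

end IsMatching

theorem IsPerfectMatchingLeft.ncard_eq {α β : Type} {L : Set α} {Ed M : Set (α × β)}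
    (hM : IsPerfectMatchingLeft L Ed M) (hEd : ∀ e ∈ Ed, e.1 ∈ L) : M.ncard = L.ncard := by
  have himage : Prod.fst '' M = L := by
    refine Set.Subset.antisymm (Set.image_subset_iff.2 fun e he => hEd e (hM.1.1 he)) fun a ha => ?_
    obtain ⟨b, hab⟩ := hM.2 a ha
    exact ⟨(a, b), hab, rfl⟩
  rw [← himage, hM.1.injOn_fst.ncard_image]

theorem xv_injective_s2 : xv.Injective := Sum.inl_injective

theorem uv_injective_s2 : uv.Injective := Sum.inr_injective.comp Sum.inl_injective

theorem yv_injective_s2 : yv.Injective := Sum.inr_injective.comp Sum.inr_injective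

/-- The edge `u'_i — y_j` of `B` attached to the edge `(v_j, ṽ_i)` of `G`; note the swap of the
two sides. -/
def feedbackEdge (p : ℕ × ℕ) : V3 × V3 := (uv p.2, yv p.1)

theorem feedbackEdge_injective : feedbackEdge.Injective :=
  (uv_injective_s2.prodMap yv_injective_s2).comp Prod.swap_injective

theorem image_feedbackEdge (E : Set (ℕ × ℕ)) : feedbackEdge '' E = EKset E := by
  ext e
  constructor
  · rintro ⟨⟨j, i⟩, h, rfl⟩
    exact ⟨i, j, h, rfl⟩
  · rintro ⟨i, j, h, rfl⟩
    exact ⟨(j, i), h, rfl⟩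

theorem preimage_feedbackEdge_EKset (E : Set (ℕ × ℕ)) : feedbackEdge ⁻¹' EKset E = E := by
  rw [← image_feedbackEdge, Set.preimage_image_eq E feedbackEdge_injective]

theorem ncard_preimage_feedbackEdge_inter (E : Set (ℕ × ℕ)) (M : Set (V3 × V3)) :
    (feedbackEdge ⁻¹' (M ∩ EKset E)).ncard = (M ∩ EKset E).ncard := by
  refine Set.ncard_preimage_of_injective_subset_range feedbackEdge_injective ?_
  rw [← image_feedbackEdge]
  exact Set.inter_subset_right.trans (Set.image_subset_range _ _)

theorem IsMatching.preimage_feedbackEdge {Ed M : Set (V3 × V3)} (hM : IsMatching Ed M) :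
    IsMatching (feedbackEdge ⁻¹' Ed) (feedbackEdge ⁻¹' M) :=
  (hM.preimage_prodMap uv_injective_s2 yv_injective_s2).swap

/-- The right vertices `x_j` with `j ≠ 2`, the hub `x_2` being the one adjacent to every `x'_i`.
They form a tight set for Hall's condition in `B`: their neighbours all lie in the equally large
set `nonhubNeighbors`. -/
def nonhubStates (s : ℕ) : Finset V3 :=
  ((Finset.Icc 1 (s + 2)).erase 2).image xv

/-- The left vertices `x'_2, …, x'_{s-r+2}` and `y'_1, …, y'_r`, which contain all neighbours of
`nonhubStates`. -/
def nonhubNeighbors (r s : ℕ) : Finset V3 :=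
  (Finset.Icc 2 (s - r + 2)).image xv ∪ (Finset.Icc 1 r).image yv

theorem card_nonhubStates (s : ℕ) : (nonhubStates s).card = s + 1 := by
  rw [nonhubStates, Finset.card_image_of_injective _ xv_injective_s2,
    Finset.card_erase_of_mem (by simp), Nat.card_Icc]
  omega

theorem card_nonhubNeighbors_le {r s : ℕ} (hrs : r ≤ s) : (nonhubNeighbors r s).card ≤ s + 1 := by
  calc (nonhubNeighbors r s).card
      ≤ (Finset.Icc 2 (s - r + 2)).card + (Finset.Icc 1 r).card :=
        (Finset.card_union_le _ _).trans
          (Nat.add_le_add Finset.card_image_le Finset.card_image_le)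
    _ = s + 1 := by
        simp only [Nat.card_Icc]
        omega

section ClosedLoop

variable {r s : ℕ} {E : Set (ℕ × ℕ)} {M : Set (V3 × V3)}

theorem mem_nonhubNeighbors_of_mem_edgesB {a b : V3} (hb : b ∈ nonhubStates s)
    (hab : (a, b) ∈ edgesB r s E) : a ∈ nonhubNeighbors r s := by
  simp only [nonhubStates, nonhubNeighbors, edgesB, xv, uv, yv, Finset.mem_image,
    Finset.mem_union, Finset.mem_erase, Finset.mem_Icc, Set.mem_Icc, Set.mem_ofPred_eq,
    Prod.mk.injEq] at hb hab ⊢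
  grind

theorem eq_or_mem_EKset_of_mem_edgesB {a : V3} {j : ℕ} (h : (a, yv j) ∈ edgesB r s E) :
    a = yv j ∨ (a, yv j) ∈ EKset E := by
  simp only [EKset, edgesB, xv, uv, yv, Set.mem_ofPred_eq, Prod.mk.injEq] at h ⊢
  grind

theorem exists_yv_xv_mem (hrs : r ≤ s)
    (hM : IsPerfectMatchingOn (vertsB r s) (vertsB r s) (edgesB r s E) M) {i : ℕ}
    (hi : i ∈ Set.Icc 1 r) : ∃ j, (yv i, xv j) ∈ M := by
  have hcover : ∀ b ∈ nonhubStates s, ∃ a ∈ nonhubNeighbors r s, (a, b) ∈ M := by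
    intro b hb
    obtain ⟨j, hj, rfl⟩ := Finset.mem_image.1 hb
    obtain ⟨a, ha⟩ := hM.2.2 (xv j) (Or.inl ⟨j, Finset.mem_Icc.1 (Finset.mem_of_mem_erase hj), rfl⟩)
    exact ⟨a, mem_nonhubNeighbors_of_mem_edgesB hb (hM.1.1 ha), ha⟩
  have hyi : yv i ∈ nonhubNeighbors r s :=
    Finset.mem_union_right _ (Finset.mem_image_of_mem yv (Finset.mem_Icc.2 hi))
  obtain ⟨b, hb, hib⟩ := hM.1.exists_mem_of_card_le hcover
    ((card_nonhubNeighbors_le hrs).trans_eq (card_nonhubStates s).symm) _ hyi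
  obtain ⟨j, -, rfl⟩ := Finset.mem_image.1 hb
  exact ⟨j, hib⟩

theorem yv_yv_notMem (hrs : r ≤ s)
    (hM : IsPerfectMatchingOn (vertsB r s) (vertsB r s) (edgesB r s E) M) {i : ℕ}
    (hi : i ∈ Set.Icc 1 r) : (yv i, yv i) ∉ M := by
  intro hii
  obtain ⟨j, hij⟩ := exists_yv_xv_mem hrs hM hi
  exact Sum.inr_ne_inl (hM.1.eq_of_mem_of_mem hii hij)

theorem exists_uv_yv_mem_inter_EKset (hrs : r ≤ s)
    (hM : IsPerfectMatchingOn (vertsB r s) (vertsB r s) (edgesB r s E) M) {j : ℕ}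
    (hj : j ∈ Set.Icc 1 r) : ∃ i, (uv i, yv j) ∈ M ∩ EKset E := by
  obtain ⟨a, ha⟩ := hM.2.2 (yv j) (Or.inr (Or.inr ⟨j, hj, rfl⟩))
  rcases eq_or_mem_EKset_of_mem_edgesB (hM.1.1 ha) with rfl | hfeedback
  · exact absurd ha (yv_yv_notMem hrs hM hj)
  · have ⟨i, k, _, hik⟩ := hfeedback
    obtain rfl : a = uv i := congrArg Prod.fst hik
    exact ⟨i, ha, hfeedback⟩

end ClosedLoop

/-- structural claim from the only-if part of Theorem 1.  Every
perfect matching `M_B` of `B` satisfies: `M_B ∩ E_K` has cardinality exactly `r`,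
it matches all of the vertices `y_1, …, y_r`, and the corresponding edge set
`{(v_j, ṽ_i) : u'_i—y_j ∈ M_B ∩ E_K}` is a perfect matching of `G`. -/
theorem perfect_matching_structure (r s : ℕ) (hr : 0 < r) (hrs : r ≤ s)
    (E : Set (ℕ × ℕ)) (hE : E ⊆ Set.Icc 1 r ×ˢ Set.Icc 1 s)
    (MB : Set (V3 × V3))
    (hMB : IsPerfectMatchingOn (vertsB r s) (vertsB r s) (edgesB r s E) MB) :
    (MB ∩ EKset E).ncard = r ∧
    (∀ j ∈ Set.Icc 1 r, ∃ i, (uv i, yv j) ∈ MB ∩ EKset E) ∧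
    IsPerfectMatchingLeft (Set.Icc 1 r) E
      {p : ℕ × ℕ | (uv p.2, yv p.1) ∈ MB ∩ EKset E} := by
  have hcover (j : ℕ) (hj : j ∈ Set.Icc 1 r) : ∃ i, (uv i, yv j) ∈ MB ∩ EKset E :=
    exists_uv_yv_mem_inter_EKset hrs hMB hj
  have hmatching : IsMatching E (feedbackEdge ⁻¹' (MB ∩ EKset E)) := by
    simpa only [preimage_feedbackEdge_EKset] using (hMB.1.inter (EKset E)).preimage_feedbackEdge
  have hperfect : IsPerfectMatchingLeft (Set.Icc 1 r) E (feedbackEdge ⁻¹' (MB ∩ EKset E)) :=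
    ⟨hmatching, hcover⟩
  refine ⟨?_, hcover, hperfect⟩
  calc (MB ∩ EKset E).ncard
      = (feedbackEdge ⁻¹' (MB ∩ EKset E)).ncard := (ncard_preimage_feedbackEdge_inter E MB).symm
    _ = (Set.Icc 1 r).ncard := hperfect.ncard_eq fun _ he => (hE he).1
    _ = r := by simp [Set.ncard_eq_toFinset_card']

end ResilientFeedback
end

section
/- If T* ⊆ {1,…,r} is γ-resilient and has minimum cardinality among all γ-resilient subsets of {1,…,r}, then T* is a multi-cover of U with demand γ+1 and has minimum cardinality among all multi-covers of U with demand γ+1. (Paper's Theorem 2(i).) -/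
namespace ResilientFeedback

/-- Two vertices lie in the same strongly connected component: each is reachable
from the other by a directed path. -/
def SameSCC {V : Type} (adj : V → V → Prop) (a b : V) : Prop :=
  Relation.ReflTransGen adj a b ∧ Relation.ReflTransGen adj b a

/-- Edge relation of the closed-loop digraph `D_T` of the reduction: a self-loop
`x_j → x_j` for every `j ∈ {1,…,N}`; `u_1 → x_j` for every `j ∈ {1,…,N}`;
`x_j → y_i` whenever `i ∈ {1,…,r}` and `j ∈ S i`; and the feedback edges
`y_i → u_1` for every `i ∈ T`. -/
def adjD (N r : ℕ) (S : ℕ → Set ℕ) (T : Set ℕ) : V3 → V3 → Prop := fun a b =>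
  (∃ j ∈ Set.Icc 1 N, a = xv j ∧ b = xv j) ∨
  (∃ j ∈ Set.Icc 1 N, a = uv 1 ∧ b = xv j) ∨
  (∃ i ∈ Set.Icc 1 r, ∃ j ∈ S i, a = xv j ∧ b = yv i) ∨
  (∃ i ∈ T, a = yv i ∧ b = uv 1)

/-- `T` is `γ`-resilient: for every `I ⊆ T` with `|I| ≤ γ`, every state vertex
`x_j` lies in the same SCC of `D_{T∖I}` as both endpoints of some feedback edge
`y_i → u_1` with `i ∈ T∖I`. -/
def Resilient (N r : ℕ) (S : ℕ → Set ℕ) (γ : ℕ) (T : Set ℕ) : Prop :=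
  ∀ I ⊆ T, I.ncard ≤ γ → ∀ j ∈ Set.Icc 1 N,
    ∃ i ∈ T \ I, SameSCC (adjD N r S (T \ I)) (xv j) (yv i) ∧
                 SameSCC (adjD N r S (T \ I)) (xv j) (uv 1)

/-- `T` is a multi-cover of the universe `{1,…,N}` with demand `α`: every element
`e ∈ {1,…,N}` satisfies `|{i ∈ T : e ∈ S_i}| ≥ α`. -/
def MultiCover (N : ℕ) (S : ℕ → Set ℕ) (α : ℕ) (T : Set ℕ) : Prop :=
  ∀ e ∈ Set.Icc 1 N, α ≤ {i ∈ T | e ∈ S i}.ncard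

/-! Apart from its self-loop, `x_j` can reach `u_1` only through `x_j → y_i → u_1` with `i ∈ T` and
`j ∈ S_i`, and the edge `u_1 → x_j` closes this path to a cycle. Hence `T` is `γ`-resilient iff, for
every `j`, no `γ` failures exhaust `{i ∈ T | j ∈ S_i}`, i.e. iff this set has more than `γ`
elements. So the `γ`-resilient sets are exactly the multi-covers with demand `γ + 1`, and the two
minimization problems coincide. -/

theorem lt_ncard_iff_forall_exists_notMem {α : Type*} {A T : Set α} {n : ℕ} (hT : T.Finite)
    (hA : A ⊆ T) : n < A.ncard ↔ ∀ I ⊆ T, I.ncard ≤ n → ∃ a ∈ A, a ∉ I := by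
  constructor
  · intro hn I hI hIn
    exact Set.exists_mem_notMem_of_ncard_lt_ncard (hIn.trans_lt hn) (hT.subset hI)
  · intro h
    by_contra! hn
    obtain ⟨a, ha, ha'⟩ := h A hA hn
    exact ha' ha

section ClosedLoop

variable {N r γ i j : ℕ} {S : ℕ → Set ℕ} {T : Set ℕ} {b : V3}

theorem adjD_xv_left_iff :
    adjD N r S T (xv j) b ↔
      (j ∈ Set.Icc 1 N ∧ b = xv j) ∨ ∃ i ∈ Set.Icc 1 r, j ∈ S i ∧ b = yv i := by
  simp [adjD, xv, uv, yv]

theorem adjD_yv_left_iff : adjD N r S T (yv i) b ↔ i ∈ T ∧ b = uv 1 := by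
  simp [adjD, xv, uv, yv]

theorem adjD_uv_one_left_iff : adjD N r S T (uv 1) b ↔ ∃ j ∈ Set.Icc 1 N, b = xv j := by
  simp [adjD, xv, uv, yv]

theorem mem_of_reflTransGen_yv_uv (h : Relation.ReflTransGen (adjD N r S T) (yv i) (uv 1)) :
    i ∈ T := by
  obtain heq | ⟨b, hib, -⟩ := h.cases_head
  · simp [yv, uv] at heq
  · exact (adjD_yv_left_iff.mp hib).1

theorem exists_mem_of_reflTransGen_xv_uv
    (h : Relation.ReflTransGen (adjD N r S T) (xv j) (uv 1)) : ∃ i ∈ T, j ∈ S i := by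
  generalize hx : xv j = x at h
  induction h using Relation.ReflTransGen.head_induction_on with
  | refl => simp [xv, uv] at hx
  | head hstep hrest ih =>
    subst hx
    obtain ⟨-, rfl⟩ | ⟨i, -, hji, rfl⟩ := adjD_xv_left_iff.mp hstep
    · exact ih rfl
    · exact ⟨i, mem_of_reflTransGen_yv_uv hrest, hji⟩

theorem sameSCC_xv_yv_and_xv_uv_of_mem (hi : i ∈ Set.Icc 1 r) (hiT : i ∈ T) (hj : j ∈ Set.Icc 1 N)
    (hji : j ∈ S i) :
    SameSCC (adjD N r S T) (xv j) (yv i) ∧ SameSCC (adjD N r S T) (xv j) (uv 1) := by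
  have hxy : adjD N r S T (xv j) (yv i) := adjD_xv_left_iff.mpr (.inr ⟨i, hi, hji, rfl⟩)
  have hyu : adjD N r S T (yv i) (uv 1) := adjD_yv_left_iff.mpr ⟨hiT, rfl⟩
  have hux : adjD N r S T (uv 1) (xv j) := adjD_uv_one_left_iff.mpr ⟨j, hj, rfl⟩
  exact ⟨⟨.single hxy, .head hyu (.single hux)⟩, ⟨.head hxy (.single hyu), .single hux⟩⟩

theorem exists_sameSCC_feedback_iff (hT : T ⊆ Set.Icc 1 r) (hj : j ∈ Set.Icc 1 N) :
    (∃ i ∈ T, SameSCC (adjD N r S T) (xv j) (yv i) ∧ SameSCC (adjD N r S T) (xv j) (uv 1)) ↔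
      ∃ i ∈ T, j ∈ S i := by
  constructor
  · rintro ⟨-, -, -, hxu, -⟩
    exact exists_mem_of_reflTransGen_xv_uv hxu
  · rintro ⟨i, hiT, hji⟩
    exact ⟨i, hiT, sameSCC_xv_yv_and_xv_uv_of_mem (hT hiT) hiT hj hji⟩

theorem resilient_iff_forall_exists_mem_sdiff (hT : T ⊆ Set.Icc 1 r) :
    Resilient N r S γ T ↔
      ∀ j ∈ Set.Icc 1 N, ∀ I ⊆ T, I.ncard ≤ γ → ∃ i ∈ T \ I, j ∈ S i := by
  have hscc (I : Set ℕ) {j : ℕ} (hj : j ∈ Set.Icc 1 N) :=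
    exists_sameSCC_feedback_iff (S := S) (Set.sdiff_subset.trans hT : T \ I ⊆ _) hj
  constructor
  · intro h j hj I hI hIγ
    exact (hscc I hj).mp (h I hI hIγ j hj)
  · intro h I hI hIγ j hj
    exact (hscc I hj).mpr (h j hj I hI hIγ)

theorem resilient_iff_multiCover (hT : T ⊆ Set.Icc 1 r) :
    Resilient N r S γ T ↔ MultiCover N S (γ + 1) T := by
  have hfin : T.Finite := (Set.finite_Icc 1 r).subset hT
  rw [resilient_iff_forall_exists_mem_sdiff hT]
  refine forall₂_congr fun j _ => ?_
  rw [Nat.succ_le_iff, lt_ncard_iff_forall_exists_notMem hfin (Set.sep_subset T (j ∈ S ·))]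
  refine forall₃_congr fun I _ _ => exists_congr fun i => ?_
  simp only [Set.mem_sdiff, Set.mem_sep_iff, and_right_comm]

end ClosedLoop

/-- paper's Theorem 2(i).  If `T* ⊆ {1,…,r}` is `γ`-resilient and
has minimum cardinality among all `γ`-resilient subsets of `{1,…,r}`, then `T*` is
a multi-cover of `U` with demand `γ + 1` of minimum cardinality among all such
multi-covers. -/
theorem optimal_resilient_is_optimal_multicover (N r : ℕ) (hN : 0 < N) (hr : 0 < r)
    (S : ℕ → Set ℕ) (hS : ∀ i ∈ Set.Icc 1 r, S i ⊆ Set.Icc 1 N)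
    (hcov : ∀ e ∈ Set.Icc 1 N, ∃ i ∈ Set.Icc 1 r, e ∈ S i)
    (γ : ℕ) (hγ : 0 < γ)
    (Tstar : Set ℕ) (hTstar : Tstar ⊆ Set.Icc 1 r)
    (hres : Resilient N r S γ Tstar)
    (hmin : ∀ T ⊆ Set.Icc 1 r, Resilient N r S γ T → Tstar.ncard ≤ T.ncard) :
    MultiCover N S (γ + 1) Tstar ∧
    ∀ T ⊆ Set.Icc 1 r, MultiCover N S (γ + 1) T → Tstar.ncard ≤ T.ncard := by
  refine ⟨(resilient_iff_multiCover hTstar).mp hres, fun T hT hTcover => ?_⟩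
  exact hmin T hT ((resilient_iff_multiCover hT).mpr hTcover)

end ResilientFeedback
end
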